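/- Let n ≥ 1 and suppose the Kasteleyn matrix K_n, regarded as a matrix over ℚ, is invertible. Then for every integer 0 ≤ j ≤ 2n−1, K_n⁻¹((j,j+1),(0,0)) = K_n⁻¹((j,j+1), b_n); equivalently, −K_n⁻¹((0,0),(j,j+1)) = K_n⁻¹((j,j+1), b_n). -/

import Mathlib

open Finset

/-- Membership predicate for the vertex set `V_n` of the TSSCPP graph `G_n`:
`0 ≤ x₁ ≤ 2n`, `x₁ ≤ x₂ ≤ 2n+1`, with `(2n,2n+1)` removed when `n` is odd. -/
def memV (n : ℕ) (x : ℤ × ℤ) : Prop :=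
  0 ≤ x.1 ∧ x.1 ≤ 2*(n:ℤ) ∧ x.1 ≤ x.2 ∧ x.2 ≤ 2*(n:ℤ)+1 ∧
    ¬(n % 2 = 1 ∧ x.1 = 2*(n:ℤ) ∧ x.2 = 2*(n:ℤ)+1)

instance memV.decPred (n : ℕ) : DecidablePred (memV n) := fun x => by
  unfold memV; infer_instance

/-- The vertex set `V_n` as a finite set. -/
noncomputable def Vfin (n : ℕ) : Finset (ℤ × ℤ) :=
  (Finset.Icc (0:ℤ) (2*(n:ℤ)) ×ˢ Finset.Icc (0:ℤ) (2*(n:ℤ)+1)).filter (memV n)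

/-- The vertex set `V_n` as a set. -/
def Vset (n : ℕ) : Set (ℤ × ℤ) := {x | memV n x}

/-- The distinguished vertex `b_n = (2n, 2n+1-(n mod 2))`. -/
def bvertex (n : ℕ) : ℤ × ℤ := (2*(n:ℤ), 2*(n:ℤ)+1 - ((n % 2 : ℕ) : ℤ))

/-- Edge relation (with `x` the "lower-left" endpoint) of the TSSCPP graph `G_n`:
horizontal edges `((x₁,x₂),(x₁+1,x₂))` for `0 ≤ x₁ ≤ 2n−1`, `x₁ ≤ x₂ ≤ 2n+1`, `x₁+x₂` odd;
vertical edges `((x₁,x₂),(x₁,x₂+1))` for `0 ≤ x₁ ≤ 2n` (`2n−1` when `n` odd), `x₁ ≤ x₂ ≤ 2n`;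
diagonal edges `((x₁,x₁),(x₁+1,x₁+1))` for `0 ≤ x₁ ≤ 2n−1`. -/
def edgeRel (n : ℕ) (x y : ℤ × ℤ) : Prop :=
  (y.1 = x.1 + 1 ∧ y.2 = x.2 ∧ 0 ≤ x.1 ∧ x.1 ≤ 2*(n:ℤ) - 1 ∧ x.1 ≤ x.2 ∧
      x.2 ≤ 2*(n:ℤ)+1 ∧ Odd (x.1 + x.2)) ∨
  (y.1 = x.1 ∧ y.2 = x.2 + 1 ∧ 0 ≤ x.1 ∧ x.1 ≤ 2*(n:ℤ) - ((n % 2 : ℕ) : ℤ) ∧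
      x.1 ≤ x.2 ∧ x.2 ≤ 2*(n:ℤ)) ∨
  (x.1 = x.2 ∧ y.1 = x.1 + 1 ∧ y.2 = x.2 + 1 ∧ 0 ≤ x.1 ∧ x.1 ≤ 2*(n:ℤ) - 1)

/-- The TSSCPP graph `G_n` (as a graph on all of `ℤ × ℤ`; all of its edges join
vertices of `V_n`). -/
def Gph (n : ℕ) : SimpleGraph (ℤ × ℤ) where
  Adj x y := edgeRel n x y ∨ edgeRel n y x
  symm := ⟨fun x y h => Or.symm h⟩
  loopless := by
    constructor
    rintro ⟨x1, x2⟩ (h | h) <;>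
      rcases h with ⟨h1, h2, -⟩ | ⟨h1, h2, -⟩ | ⟨h0, h1, h2, -⟩ <;> omega

/-- `Zpm n U` = number of perfect matchings of the subgraph of `G_n` induced on `V_n \ U`. -/
noncomputable def Zpm (n : ℕ) (U : Set (ℤ × ℤ)) : ℕ :=
  Nat.card {M : ((Gph n).induce (Vset n \ U)).Subgraph // M.IsPerfectMatching}

/-- The entry function `k(x,y)` of the Kasteleyn matrix. -/
def kfun (x y : ℤ × ℤ) : ℚ :=
  if ((x.1 + x.2) % 2 = 0 ∧ x.2 = y.2 ∧ x.1 - y.1 = 1) ∨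
     ((x.1 + x.2) % 2 = 0 ∧ x.1 = y.1 ∧ (y.2 - x.2 = 1 ∨ x.2 - y.2 = 1)) ∨
     (x.1 = x.2 ∧ y.1 = y.2 ∧ y.1 = x.1 - 1)
  then 1 else 0

/-- The Kasteleyn matrix `K_n` of `G_n` over `ℚ`, rows and columns indexed by `V_n`. -/
def Kmat (n : ℕ) : Matrix ↥(Vfin n) ↥(Vfin n) ℚ :=
  fun x y => kfun x.val y.val - kfun y.val x.val

theorem mem_Vfin {n : ℕ} {x : ℤ × ℤ} : x ∈ Vfin n ↔ memV n x := by
  simp only [Vfin, mem_filter, mem_product, mem_Icc, and_iff_right_iff_imp]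
  unfold memV
  omega

/-- The entry of the Kasteleyn matrix of the infinite graph. -/
def kast (x y : ℤ × ℤ) : ℚ := kfun x y - kfun y x

/-- The sign `(-1) ^ i`. -/
def altSign (i : ℤ) : ℚ := if i % 2 = 0 then 1 else -1

theorem altSign_add_one (i : ℤ) : altSign (i + 1) = -altSign i := by
  unfold altSign
  split_ifs <;> first | omega | norm_num

theorem altSign_sub_one (i : ℤ) : altSign (i - 1) = -altSign i := by
  rw [← neg_neg (altSign (i - 1)), ← altSign_add_one, sub_add_cancel]

/-- The solution `u` of `K_n u = δ_{(0,0)} - δ_{b_n}`: it alternates in sign along the diagonal, and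
is `1` at `(2n, 2n+1)` and zero elsewhere. -/
def diagVec (n : ℕ) (y : ℤ × ℤ) : ℚ :=
  (if y.1 = y.2 then altSign y.1 else 0) + (if y = (2 * (n : ℤ), 2 * (n : ℤ) + 1) then 1 else 0)

theorem kast_diag {x : ℤ × ℤ} (hx : x.1 ≤ x.2) (i : ℤ) :
    kast x (i, i) =
      (if i = x.1 - 1 then (if x.2 = x.1 then 1 else 0) else 0)
      - (if i = x.1 + 1 then (if x.2 = x.1 ∨ x.2 = x.1 + 1 then 1 else 0) else 0)
      - (if i = x.1 then (if x.2 = x.1 + 1 then 1 else 0) else 0) := by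
  obtain ⟨a, b⟩ := x
  simp only at hx
  obtain h | h | h : b = a ∨ b = a + 1 ∨ a + 2 ≤ b := by omega
  all_goals
    simp only [kast, kfun, true_and]
    split_ifs <;> first | omega | norm_num

theorem kast_corner {n : ℕ} {x : ℤ × ℤ} (hx : memV n x) :
    kast x (2 * (n : ℤ), 2 * (n : ℤ) + 1) = if x = (2 * (n : ℤ), 2 * (n : ℤ)) then 1 else 0 := by
  obtain ⟨a, b⟩ := x
  simp only [memV] at hx
  simp only [kast, kfun, Prod.mk.injEq]
  split_ifs <;> first | omega | norm_num

theorem sum_Vfin_diag (n : ℕ) (f : ℤ × ℤ → ℚ) :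
    ∑ y ∈ Vfin n, f y * (if y.1 = y.2 then altSign y.1 else 0)
      = ∑ i ∈ Icc (0 : ℤ) (2 * n), f (i, i) * altSign i := by
  symm
  rw [← sum_subset (s₁ := (Icc (0 : ℤ) (2 * n)).image fun i => (i, i))]
  · rw [sum_image (fun a _ b _ h => (Prod.mk.inj h).1)]
    simp
  · intro y hy
    obtain ⟨i, hi, rfl⟩ := mem_image.1 hy
    rw [mem_Icc] at hi
    simp only [mem_Vfin, memV]
    omega
  · rintro ⟨a, b⟩ hy hy'
    rw [if_neg, mul_zero]
    rintro h
    simp only at h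
    subst h
    simp only [mem_Vfin, memV] at hy
    exact hy' (mem_image.2 ⟨a, mem_Icc.2 ⟨hy.1, hy.2.1⟩, rfl⟩)

theorem sum_kast_mul_diagVec {n : ℕ} (hn : 1 ≤ n) {x : ℤ × ℤ} (hx : memV n x) :
    ∑ y ∈ Vfin n, kast x y * diagVec n y
      = (if x = (0, 0) then 1 else 0) - (if x = bvertex n then 1 else 0) := by
  have hle : x.1 ≤ x.2 := hx.2.2.1
  simp only [diagVec, mul_add, sum_add_distrib, sum_Vfin_diag]
  simp only [mul_ite, mul_one, mul_zero,
    sum_ite_eq', kast_corner hx, kast_diag hle, sub_mul, ite_mul, zero_mul, one_mul,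
    sum_sub_distrib, mem_Vfin, mem_Icc]
  obtain ⟨a, b⟩ := x
  simp only [memV] at hx hle ⊢
  simp only [bvertex, altSign_add_one, altSign_sub_one, Prod.mk.injEq, and_true]
  have hzero : a = 0 ∨ a = 2 * n → altSign a = 1 := fun h => if_pos (by omega)
  obtain rfl | rfl | h : b = a ∨ b = a + 1 ∨ a + 2 ≤ b := by omega
  · simp only [true_or, if_true, left_eq_add, one_ne_zero, if_false, ite_self, sub_zero]
    split_ifs <;> first | omega | (rw [hzero (by omega)]; norm_num) | norm_num
  · simp only [or_true, if_true, add_eq_left, one_ne_zero, if_false, ite_self, zero_sub]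
    split_ifs <;> first | omega | (rw [hzero (by omega)]; norm_num) | norm_num
  · have h₁ : b ≠ a := by omega
    have h₂ : b ≠ a + 1 := by omega
    simp only [h₁, h₂, or_self, if_false, ite_self, sub_zero, zero_add]
    split_ifs <;> first | omega | norm_num

theorem Kmat_mulVec_diagVec {n : ℕ} (hn : 1 ≤ n) (h0 : ((0 : ℤ), (0 : ℤ)) ∈ Vfin n)
    (hb : bvertex n ∈ Vfin n) :
    (Kmat n).mulVec (fun y => diagVec n y.val)
      = Pi.single ⟨(0, 0), h0⟩ 1 - Pi.single ⟨bvertex n, hb⟩ 1 := by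
  ext x
  have h := sum_kast_mul_diagVec hn (mem_Vfin.1 x.2)
  rw [← sum_coe_sort] at h
  simpa [Matrix.mulVec, dotProduct, Pi.single_apply, Subtype.ext_iff, Kmat, kast] using h

theorem Kmat_inv_apply_neg (n : ℕ) (x y : Vfin n) : -(Kmat n)⁻¹ y x = (Kmat n)⁻¹ x y := by
  have hT : (Kmat n).transpose = -Kmat n := by
    ext x y
    simp [Kmat]
  have h := Matrix.transpose_nonsing_inv (Kmat n)
  have hneg : (-Kmat n)⁻¹ = -(Kmat n)⁻¹ := by
    by_cases hdet : IsUnit (Kmat n).det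
    · exact Matrix.inv_eq_left_inv (by rw [neg_mul_neg, Matrix.nonsing_inv_mul _ hdet])
    · rw [Matrix.nonsing_inv_apply_not_isUnit _ hdet, Matrix.nonsing_inv_apply_not_isUnit, neg_zero]
      rwa [← hT, Matrix.det_transpose]
  rw [hT, hneg] at h
  simpa using (congrFun (congrFun h y) x).symm

/-- For `n ≥ 1` with `K_n` invertible over `ℚ`, and `0 ≤ j ≤ 2n−1`:
`K_n⁻¹((j,j+1),(0,0)) = K_n⁻¹((j,j+1), b_n)`; equivalently,
`−K_n⁻¹((0,0),(j,j+1)) = K_n⁻¹((j,j+1), b_n)`. -/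
theorem Kinv_first_column (n : ℕ) (hn : 1 ≤ n) (hdet : IsUnit (Kmat n).det)
    (j : ℕ) (hj : j ≤ 2*n - 1)
    (hx : (((j:ℤ), (j:ℤ)+1)) ∈ Vfin n) (h0 : ((0:ℤ), (0:ℤ)) ∈ Vfin n)
    (hb : bvertex n ∈ Vfin n) :
    (Kmat n)⁻¹ ⟨((j:ℤ), (j:ℤ)+1), hx⟩ ⟨((0:ℤ), (0:ℤ)), h0⟩
        = (Kmat n)⁻¹ ⟨((j:ℤ), (j:ℤ)+1), hx⟩ ⟨bvertex n, hb⟩ ∧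
      -(Kmat n)⁻¹ ⟨((0:ℤ), (0:ℤ)), h0⟩ ⟨((j:ℤ), (j:ℤ)+1), hx⟩
        = (Kmat n)⁻¹ ⟨((j:ℤ), (j:ℤ)+1), hx⟩ ⟨bvertex n, hb⟩ := by
  rw [Kmat_inv_apply_neg, and_self]
  have h := congrArg (Kmat n)⁻¹.mulVec (Kmat_mulVec_diagVec hn h0 hb)
  rw [Matrix.mulVec_mulVec, Matrix.nonsing_inv_mul _ hdet, Matrix.one_mulVec,
    Matrix.mulVec_sub, Matrix.mulVec_single_one, Matrix.mulVec_single_one] at h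
  have hj' := congrFun h ⟨((j : ℤ), (j : ℤ) + 1), hx⟩
  have hu : diagVec n ((j : ℤ), (j : ℤ) + 1) = 0 := by
    simp only [diagVec, Prod.mk.injEq]
    rw [if_neg (by omega), if_neg (by omega), add_zero]
  simp only [hu, Pi.sub_apply, Matrix.col_apply] at hj'
  exact sub_eq_zero.1 hj'.symm
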